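/- Fix a combinatorial map (V, H, F, opp, tgt, left). Assume: (a) ∂₂x is a 1-cycle for every face x ∈ F; (b) there are a finite index set Y, 1-cycles (f_e)_{e∈Y} and cocycles (K_e)_{e∈Y} with ⟨f_e⟩(K_{e'}) = 1 if e = e' and 0 otherwise; (c) every cocycle D can be written as D = Σ_{e∈Y} z_e·K_e + R for some z ∈ ℤ^Y and coboundary R; (d) the dual graph (vertex set F, with an edge joining left(h) and left(opp h) for each h ∈ H) is connected. Let S ⊆ F be nonempty, x ∈ S, let P(y) be a copath from x to y for each y ∈ S with P(x) = 0, let a : Y → ℤ, let a' : S → ℤ with a'(x) = 0, and let f be a 1-chain. Then the following are equivalent: (i) there exists an f-circulation c with ⟨c⟩(K_e) = a(e) for all e ∈ Y and ⟨c⟩(P(y)) = a'(y) for all y ∈ S; (ii) for all y, y' ∈ S and all z ∈ ℤ^Y, Σ_e z_e·a(e) + a'(y') - a'(y) ≤ ⟨f⟩⁺(Σ_e z_e·K_e + P(y') - P(y) + B⋆); (iii) for all y, y' ∈ S, z ∈ ℤ^Y and coboundaries R, if the 1-chain D = Σ_e z_e·K_e + P(y') - P(y) + R satisfies |D(h)|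 ≤ 1 for every h ∈ H, then Σ_e z_e·a(e) + a'(y') - a'(y) ≤ ⟨f⟩⁺(D). (Theorem 17 of the paper, with the properties of the homology bases of an orientable surface stated as explicit hypotheses.) -/

import Mathlib

/-!
A circulation `c` with the prescribed pairings satisfies `⟨c⟩(D) ≤ ⟨f⟩⁺(D)` for every 1-chain `D`,
and pairs to zero with coboundaries; this gives (i) ⇒ (ii) (`circ_bound`), and (iii) is a special
case of (ii).

For (iii) ⇒ (i), start from the cycle `c₀ = ∑ a e • fe e`, which pairs correctly with all `Ke e`, and
look for `c = c₀ + ∑ π u • ∂₂ u`. Since `⟨∂₂ u⟩(K) = (∂⋆₁ K)(u)`, the pairings with the `Ke e` do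
not change, and the pairings with the copaths become the requirement `π y = a' y - ⟨c₀⟩(P y)` on `S`.
The condition `c ⪯ f` becomes the system of difference constraints
`π (left h) - π (left (opp h)) ≤ max (f h) 0 - c₀ h` on the dual graph. By shortest walks
(`exists_potential`), it is solvable provided that no walk between faces of `S`, and no closed walk,
has too small a weight; cutting off closed subwalks (`walk_bound`), it suffices to consider walks
that repeat no half-edge. The 1-chain `D` of such a walk has values in `{-1, 0, 1}`, and by the
generation hypothesis it has the form required in (iii), which then yields the weight bound.
-/

open Finset

namespace Paper

variable {V H F : Type*} [Fintype V] [Fintype H] [Fintype F]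
variable [DecidableEq V] [DecidableEq F]

/-- `f` is a 1-chain: antisymmetric under the involution `opp`. -/
def OneChain (opp : H → H) (f : H → ℤ) : Prop :=
  ∀ h, f (opp h) = - f h

/-- `⟨f⟩(K) = (1/2)·Σ_h f(h)·K(h)`; the sum is even when `f` and `K` are 1-chains. -/
def pairing (f K : H → ℤ) : ℤ := (∑ h, f h * K h) / 2

/-- `⟨f⟩⁺(K) = Σ_{h : f(h) > 0, K(h) > 0} f(h)·K(h)`. -/
def transplus (f K : H → ℤ) : ℤ :=
  ∑ h, if 0 < f h ∧ 0 < K h then f h * K h else 0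

/-- `|K| = (1/2)·Σ_h |K(h)|`; the sum is even when `K` is a 1-chain. -/
def norm1 (K : H → ℤ) : ℤ := (∑ h, |K h|) / 2

/-- The boundary `∂₁ f : V → ℤ` of a 1-chain `f`. -/
def bd1 (tgt : H → V) (f : H → ℤ) (v : V) : ℤ :=
  ∑ h, if tgt h = v then f h else 0

/-- The 1-chain `∂⋆₂ v`. -/
def coB (opp : H → H) (tgt : H → V) (v : V) : H → ℤ :=
  fun h => (if tgt h = v then 1 else 0) - (if tgt (opp h) = v then 1 else 0)

/-- A coboundary: a ℤ-linear combination of the 1-chains `∂⋆₂ v` for `v ∈ V`. -/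
def IsCobound (opp : H → H) (tgt : H → V) (R : H → ℤ) : Prop :=
  ∃ z : V → ℤ, ∀ h, R h = ∑ v, z v * coB opp tgt v h

/-- A 1-cycle: a 1-chain `f` with `∂₁ f = 0`. -/
def OneCycle (opp : H → H) (tgt : H → V) (f : H → ℤ) : Prop :=
  OneChain opp f ∧ ∀ v, bd1 tgt f v = 0

/-- A flow: a 1-chain with all values in `{-1, 0, 1}`. -/
def IsFlow (opp : H → H) (f : H → ℤ) : Prop :=
  OneChain opp f ∧ ∀ h, f h = -1 ∨ f h = 0 ∨ f h = 1

/-- A nowhere-zero flow: a 1-chain with all values in `{-1, 1}`. -/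
def IsNZFlow (opp : H → H) (f : H → ℤ) : Prop :=
  OneChain opp f ∧ ∀ h, f h = 1 ∨ f h = -1

/-- `c ⪯ f`: `0 ≤ c(h) ≤ f(h)` for every half-edge `h` with `f(h) ≥ 0`. -/
def Prec (c f : H → ℤ) : Prop :=
  ∀ h, 0 ≤ f h → 0 ≤ c h ∧ c h ≤ f h

/-- An `f`-circulation: a 1-cycle `c` with `c ⪯ f`. -/
def IsCirc (opp : H → H) (tgt : H → V) (f c : H → ℤ) : Prop :=
  OneCycle opp tgt c ∧ Prec c f

/-- `⟨f⟩⁺(K + B⋆)`: the minimum of `⟨f⟩⁺(K + R)` over all coboundaries `R`. -/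
noncomputable def transplusB (opp : H → H) (tgt : H → V) (f K : H → ℤ) : ℤ :=
  sInf {n : ℤ | ∃ R : H → ℤ, IsCobound opp tgt R ∧ n = transplus f (fun h => K h + R h)}

/-- The degree of a vertex: the number of half-edges with target `v`. -/
def degH (tgt : H → V) (v : V) : ℕ := (Finset.univ.filter fun h => tgt h = v).card

/-- `∂⋆₁ K : F → ℤ`. -/
def bdStar1 (left : H → F) (K : H → ℤ) (x : F) : ℤ :=
  ∑ h, if left h = x then K h else 0

/-- A cocycle: a 1-chain `K` with `∂⋆₁ K = 0`. -/
def Cocycle (opp : H → H) (left : H → F) (K : H → ℤ) : Prop :=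
  OneChain opp K ∧ ∀ x, bdStar1 left K x = 0

/-- The 1-chain `∂₂ x`. -/
def bd2 (opp : H → H) (left : H → F) (x : F) : H → ℤ :=
  fun h => (if left h = x then 1 else 0) - (if left (opp h) = x then 1 else 0)

/-- A 1-boundary: a ℤ-linear combination of the 1-chains `∂₂ x` for `x ∈ F`. -/
def IsBoundary1 (opp : H → H) (left : H → F) (b : H → ℤ) : Prop :=
  ∃ z : F → ℤ, ∀ h, b h = ∑ x, z x * bd2 opp left x h

/-- A copath from `x` to `y`: a 1-chain `P` with `∂⋆₁ P = y - x`. -/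
def IsCopath (opp : H → H) (left : H → F) (x y : F) (P : H → ℤ) : Prop :=
  OneChain opp P ∧
  ∀ w, bdStar1 left P w = (if w = y then 1 else 0) - (if w = x then 1 else 0)

/-! ### Bilinear pairings of 1-chains -/

/-- The fixed-point-free involution `opp` pairs off equal terms, so the sum is even and the division
by two in `pairing` is exact. -/
lemma two_mul_pairing {opp : H → H} (hinv : Function.Involutive opp) (hfp : ∀ h, opp h ≠ h)
    {f K : H → ℤ} (hf : OneChain opp f) (hK : OneChain opp K) :
    2 * pairing f K = ∑ h, f h * K h := by
  have h2 : (2 : ℤ) ∣ ∑ h, f h * K h := by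
    have : ((∑ h, f h * K h : ℤ) : ZMod 2) = 0 := by
      rw [Int.cast_sum]
      refine Finset.sum_involution (fun h _ => opp h) ?_ ?_ ?_ ?_
      · intro h _
        rw [hf, hK, neg_mul_neg]
        exact CharTwo.add_self_eq_zero _
      · intro h _ _
        exact hfp h
      · intro h _
        exact mem_univ _
      · intro h _
        exact hinv h
    exact (ZMod.intCast_zmod_eq_zero_iff_dvd _ 2).1 this
  exact Int.mul_ediv_cancel' h2

lemma sum_opp {opp : H → H} (hinv : Function.Involutive opp) (g : H → ℤ) :
    ∑ h, g (opp h) = ∑ h, g h :=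
  Equiv.sum_comp hinv.toPerm g

/-- Adjointness of `∂₁` and `∂⋆₂`. As `bd2 opp left` and `bdStar1 left` unfold to `coB opp left` and
`bd1 left`, it also gives the adjointness of `∂⋆₁` and `∂₂`. -/
lemma sum_mul_coB {U : Type*} [DecidableEq U] {opp : H → H} (hinv : Function.Involutive opp)
    (t : H → U) {c : H → ℤ} (hc : OneChain opp c) (v : U) :
    ∑ h, c h * coB opp t v h = 2 * bd1 t c v := by
  have h1 : ∑ h, c h * (if t (opp h) = v then (1 : ℤ) else 0) = - bd1 t c v := by
    rw [← sum_opp hinv]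
    simp only [hinv _, hc _, bd1]
    rw [← Finset.sum_neg_distrib]
    refine Finset.sum_congr rfl fun h _ => ?_
    split_ifs <;> simp
  simp only [coB, mul_sub, Finset.sum_sub_distrib]
  rw [h1]
  simp only [mul_ite, mul_one, mul_zero, bd1]
  ring

lemma IsCobound.oneChain {opp : H → H} (hinv : Function.Involutive opp) {tgt : H → V} {R : H → ℤ}
    (hR : IsCobound opp tgt R) : OneChain opp R := by
  obtain ⟨z, hz⟩ := hR
  intro h
  rw [hz, hz, ← Finset.sum_neg_distrib]
  refine Finset.sum_congr rfl fun v _ => ?_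
  simp only [coB, hinv h]
  ring

lemma sum_mul_cobound {opp : H → H} (hinv : Function.Involutive opp) {tgt : H → V} {c R : H → ℤ}
    (hc : OneCycle opp tgt c) (hR : IsCobound opp tgt R) : ∑ h, c h * R h = 0 := by
  obtain ⟨z, hz⟩ := hR
  simp only [hz, Finset.mul_sum]
  rw [Finset.sum_comm]
  refine Finset.sum_eq_zero fun v _ => ?_
  have := sum_mul_coB hinv tgt hc.1 v
  rw [hc.2 v] at this
  calc ∑ h, c h * (z v * coB opp tgt v h) = z v * ∑ h, c h * coB opp tgt v h := by
        rw [Finset.mul_sum]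
        exact Finset.sum_congr rfl fun h _ => by ring
    _ = 0 := by rw [this]; ring

lemma transplus_eq (f K : H → ℤ) : transplus f K = ∑ h, max (f h) 0 * max (K h) 0 := by
  refine Finset.sum_congr rfl fun h _ => ?_
  split_ifs with h1
  · rw [max_eq_left h1.1.le, max_eq_left h1.2.le]
  · rcases not_and_or.1 h1 with h2 | h2
    · rw [max_eq_right (not_lt.1 h2), zero_mul]
    · rw [max_eq_right (not_lt.1 h2), mul_zero]

lemma transplus_nonneg (f K : H → ℤ) : 0 ≤ transplus f K := by
  rw [transplus_eq]
  exact Finset.sum_nonneg fun h _ => mul_nonneg (le_max_right _ _) (le_max_right _ _)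

/-- For 1-chains, `c ⪯ f` is the family of one-sided inequalities `c h ≤ max (f h) 0`: the lower
bounds are the upper bounds at `opp h`. -/
lemma prec_iff {opp : H → H} {c f : H → ℤ}
    (hc : OneChain opp c) (hf : OneChain opp f) : Prec c f ↔ ∀ h, c h ≤ max (f h) 0 := by
  constructor
  · intro hp h
    rcases le_total 0 (f h) with h1 | h1
    · exact (hp h h1).2.trans (le_max_left _ _)
    · have := (hp (opp h) (by rw [hf]; omega)).1
      rw [hc] at this
      exact le_max_of_le_right (by omega)
  · intro hp h h1
    have h2 := hp h
    have h3 := hp (opp h)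
    rw [hc, hf] at h3
    omega

lemma sum_mul_le_transplus {opp : H → H} (hinv : Function.Involutive opp) {c f D : H → ℤ}
    (hc : OneChain opp c) (hD : OneChain opp D) (hcf : ∀ h, c h ≤ max (f h) 0) :
    ∑ h, c h * D h ≤ 2 * transplus f D := by
  have h1 : ∑ h, c h * max (-D h) 0 = - ∑ h, c h * max (D h) 0 := by
    rw [← sum_opp hinv, ← Finset.sum_neg_distrib]
    refine Finset.sum_congr rfl fun h _ => ?_
    rw [hc, hD, neg_neg]
    ring
  have h2 : ∑ h, c h * D h = 2 * ∑ h, c h * max (D h) 0 := by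
    calc ∑ h, c h * D h = ∑ h, (c h * max (D h) 0 - c h * max (-D h) 0) := by
          refine Finset.sum_congr rfl fun h _ => ?_
          rw [← mul_sub]
          congr 1
          omega
      _ = _ := by rw [Finset.sum_sub_distrib, h1]; ring
  rw [h2, transplus_eq]
  gcongr with h
  exact hcf h

/-- The pairing of a chain with the linear combinations occurring in the theorem. -/
lemma sum_mul_comb {Y : Type*} [Fintype Y] (c : H → ℤ) (Ke : Y → H → ℤ) (z : Y → ℤ)
    (A B R : H → ℤ) :
    ∑ h, c h * ((∑ e, z e * Ke e h) + A h - B h + R h) =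
      (∑ e, z e * ∑ h, c h * Ke e h) + (∑ h, c h * A h) - (∑ h, c h * B h)
        + ∑ h, c h * R h := by
  simp only [mul_add, mul_sub, Finset.sum_add_distrib, Finset.sum_sub_distrib, Finset.mul_sum]
  rw [Finset.sum_comm]
  congr 3
  refine Finset.sum_congr rfl fun e _ => Finset.sum_congr rfl fun h _ => by ring

/-! ### Walks in the dual graph -/

/-- `l` is the list of half-edges of a walk from face `u` to face `v` in the dual graph, where
a half-edge `h` is crossed from `left (opp h)` to `left h`. -/
def IsWalk (opp : H → H) (left : H → F) : List H → F → F → Prop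
  | [], u, v => u = v
  | h :: l, u, v => left (opp h) = u ∧ IsWalk opp left l (left h) v

lemma isWalk_append {opp : H → H} {left : H → F} {l m : List H} {u v : F} :
    IsWalk opp left (l ++ m) u v ↔ ∃ w, IsWalk opp left l u w ∧ IsWalk opp left m w v := by
  induction l generalizing u with
  | nil => simp [IsWalk]
  | cons h l ih => simp [IsWalk, ih, and_assoc]

lemma exists_walk {opp : H → H} (hinv : Function.Involutive opp) {left : H → F} {u v : F}
    (huv : Relation.ReflTransGen (fun a b => ∃ h, left h = a ∧ left (opp h) = b) u v) :
    ∃ l, IsWalk opp left l u v := by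
  induction huv with
  | refl => exact ⟨[], rfl⟩
  | tail _ hbc ih =>
    obtain ⟨l, hl⟩ := ih
    obtain ⟨h, h1, h2⟩ := hbc
    exact ⟨l ++ [opp h], isWalk_append.2 ⟨_, hl, by rw [hinv h]; exact h1, h2⟩⟩

lemma exists_repeat {α : Type*} {l : List α} (hl : ¬ l.Nodup) :
    ∃ (g : α) (l₁ l₂ l₃ : List α), l = l₁ ++ g :: (l₂ ++ g :: l₃) := by
  induction l with
  | nil => exact absurd List.nodup_nil hl
  | cons g l ih =>
    by_cases hg : g ∈ l
    · obtain ⟨s, t, rfl⟩ := List.append_of_mem hg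
      exact ⟨g, [], s, t, rfl⟩
    · have : ¬ l.Nodup := fun h => hl (List.nodup_cons.2 ⟨hg, h⟩)
      obtain ⟨k, l₁, l₂, l₃, rfl⟩ := ih this
      exact ⟨k, g :: l₁, l₂, l₃, rfl⟩

/-- A walk crossing the half-edge `g` twice splits into a shorter walk with the same ends and a
shorter closed walk. -/
lemma IsWalk.split {opp : H → H} {left : H → F} {g : H} {l₁ l₂ l₃ : List H} {u v : F}
    (hw : IsWalk opp left (l₁ ++ g :: (l₂ ++ g :: l₃)) u v) :
    IsWalk opp left (l₁ ++ g :: l₃) u v ∧ IsWalk opp left (l₂ ++ [g]) (left g) (left g) := by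
  obtain ⟨p, h1, h2, h3⟩ := isWalk_append.1 hw
  obtain ⟨q, h4, h5, h6⟩ := isWalk_append.1 h3
  exact ⟨isWalk_append.2 ⟨p, h1, h2, h6⟩, isWalk_append.2 ⟨q, h4, h5, rfl⟩⟩

/-- If closed walks without repeated half-edges have nonnegative weight, a lower bound on the
weight of repetition-free walks from `u` to `v` holds for all walks from `u` to `v`. -/
lemma walk_bound {opp : H → H} {left : H → F} {w : H → ℤ}
    (hcl : ∀ l u, IsWalk opp left l u u → l.Nodup → 0 ≤ (l.map w).sum)
    (n : ℕ) : ∀ (l : List H), l.length ≤ n → ∀ (u v : F) (β : ℤ), IsWalk opp left l u v →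
      (∀ m, IsWalk opp left m u v → m.Nodup → β ≤ (m.map w).sum) → β ≤ (l.map w).sum := by
  induction n with
  | zero =>
    intro l hl u v β hw hβ
    have : l = [] := List.length_eq_zero_iff.1 (by omega)
    subst this
    exact hβ _ hw List.nodup_nil
  | succ n ih =>
    intro l hl u v β hw hβ
    by_cases hn : l.Nodup
    · exact hβ l hw hn
    · obtain ⟨g, l₁, l₂, l₃, rfl⟩ := exists_repeat hn
      obtain ⟨hw1, hw2⟩ := hw.split
      simp only [List.length_append, List.length_cons] at hl
      have h1 := ih (l₁ ++ g :: l₃) (by simp; omega) u v β hw1 hβ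
      have h2 := ih (l₂ ++ [g]) (by simp; omega) _ _ 0 hw2 (fun m hm hm' => hcl m _ hm hm')
      simp only [List.map_append, List.map_cons, List.map_nil, List.sum_append, List.sum_cons,
        List.sum_nil] at h1 h2 ⊢
      omega

/-- Feasibility of a system of difference constraints `π (left h) - π (left (opp h)) ≤ w h` with
values prescribed on `S`: the least value of `b y + weight` over walks from `y ∈ S` is a solution
as soon as no walk witnesses an obvious contradiction. -/
lemma exists_potential {opp : H → H} (hinv : Function.Involutive opp) {left : H → F}
    (hconn : ∀ x y : F,
      Relation.ReflTransGen (fun a b => ∃ h, left h = a ∧ left (opp h) = b) x y)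
    (w : H → ℤ) (S : Finset F) {x : F} (hx : x ∈ S) (b : F → ℤ)
    (hcl : ∀ l u, IsWalk opp left l u u → l.Nodup → 0 ≤ (l.map w).sum)
    (hS : ∀ y ∈ S, ∀ y' ∈ S, ∀ l, IsWalk opp left l y y' → l.Nodup →
      b y' - b y ≤ (l.map w).sum) :
    ∃ π : F → ℤ, (∀ y ∈ S, π y = b y) ∧ ∀ h, π (left h) ≤ π (left (opp h)) + w h := by
  have hall : ∀ y ∈ S, ∀ y' ∈ S, ∀ l, IsWalk opp left l y y' → b y' - b y ≤ (l.map w).sum :=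
    fun y hy y' hy' l hl => walk_bound hcl l.length l le_rfl y y' _ hl (hS y hy y' hy')
  let T : F → Set ℤ := fun v => {n | ∃ y ∈ S, ∃ l, IsWalk opp left l y v ∧ n = b y + (l.map w).sum}
  have hne : ∀ v, (T v).Nonempty := by
    intro v
    obtain ⟨l, hl⟩ := exists_walk hinv (hconn x v)
    exact ⟨_, x, hx, l, hl, rfl⟩
  have hbdd : ∀ v, BddBelow (T v) := by
    intro v
    -- A fixed walk `m` back to `x` closes up any walk from `S` to `v`.
    obtain ⟨m, hm⟩ := exists_walk hinv (hconn v x)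
    refine ⟨b x - (m.map w).sum, ?_⟩
    rintro n ⟨y, hy, l, hl, rfl⟩
    have := hall y hy x hx (l ++ m) (isWalk_append.2 ⟨v, hl, hm⟩)
    rw [List.map_append, List.sum_append] at this
    omega
  refine ⟨fun v => sInf (T v), fun y hy => le_antisymm ?_ ?_, fun h => ?_⟩
  · exact csInf_le (hbdd y) ⟨y, hy, [], rfl, by simp⟩
  · refine le_csInf (hne y) ?_
    rintro n ⟨y', hy', l, hl, rfl⟩
    have := hall y' hy' y hy l hl
    omega
  · obtain ⟨y, hy, l, hl, he⟩ := Int.csInf_mem (hne (left (opp h))) (hbdd _)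
    refine csInf_le (hbdd (left h)) ⟨y, hy, l ++ [h], isWalk_append.2 ⟨_, hl, rfl, rfl⟩, ?_⟩
    simp only [he, List.map_append, List.sum_append, List.map_cons, List.map_nil, List.sum_cons,
      List.sum_nil]
    ring

/-! ### The 1-chain of a walk -/

open Classical in
/-- The 1-chain counting the signed crossings of a list of half-edges. -/
noncomputable def walkChain (opp : H → H) (l : List H) (h : H) : ℤ :=
  (l.count h : ℤ) - (l.count (opp h) : ℤ)

lemma walkChain_oneChain {opp : H → H} (hinv : Function.Involutive opp) (l : List H) :
    OneChain opp (walkChain opp l) := by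
  intro h
  simp only [walkChain, hinv h]
  ring

lemma walkChain_abs_le {opp : H → H} {l : List H} (hl : l.Nodup) (h : H) :
    |walkChain opp l h| ≤ 1 := by
  classical
  have h1 := List.nodup_iff_count_le_one.1 hl h
  have h2 := List.nodup_iff_count_le_one.1 hl (opp h)
  simp only [walkChain]
  rw [abs_le]
  constructor <;> omega

lemma sum_mul_count [DecidableEq H] (g : H → ℤ) (l : List H) :
    ∑ h, g h * (l.count h : ℤ) = (l.map g).sum := by
  induction l with
  | nil => simp
  | cons k l ih =>
    simp only [List.count_cons, List.map_cons, List.sum_cons, ← ih, Nat.cast_add, mul_add,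
      Finset.sum_add_distrib, beq_iff_eq]
    simp [add_comm]

lemma sum_mul_walkChain {opp : H → H} (hinv : Function.Involutive opp) {c : H → ℤ}
    (hc : OneChain opp c) (l : List H) :
    ∑ h, c h * walkChain opp l h = 2 * (l.map c).sum := by
  classical
  have h1 : ∑ h, c h * (l.count (opp h) : ℤ) = - (l.map c).sum := by
    rw [← sum_opp hinv, ← sum_mul_count, ← Finset.sum_neg_distrib]
    refine Finset.sum_congr rfl fun h _ => ?_
    rw [hinv h, hc]
    ring
  have h2 : ∑ h, c h * walkChain opp l h =
      ∑ h, c h * (l.count h : ℤ) - ∑ h, c h * (l.count (opp h) : ℤ) := by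
    rw [← Finset.sum_sub_distrib]
    refine Finset.sum_congr rfl fun h _ => ?_
    rw [← mul_sub]
    congr!
  rw [h2, h1, sum_mul_count]
  ring

lemma transplus_walkChain_le (opp : H → H) (f : H → ℤ) (l : List H) :
    transplus f (walkChain opp l) ≤ (l.map fun h => max (f h) 0).sum := by
  classical
  rw [transplus_eq, ← sum_mul_count]
  gcongr with h
  simp only [walkChain]
  refine max_le ?_ (by positivity)
  simp

/-- The chain of a walk from `u` to `v` is a copath from `u` to `v`: `∂⋆₁` is computed by pairing
with `∂₂ z`, and the values of `∂₂ z` telescope along the walk. -/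
lemma bdStar1_walkChain {opp : H → H} (hinv : Function.Involutive opp) {left : H → F}
    {l : List H} {u v : F} (hw : IsWalk opp left l u v) (z : F) :
    bdStar1 left (walkChain opp l) z = (if z = v then 1 else 0) - (if z = u then 1 else 0) := by
  have hbc : OneChain opp (bd2 opp left z) := by
    intro h
    simp only [bd2, hinv h]
    ring
  have h1 : ∑ h, walkChain opp l h * bd2 opp left z h = 2 * bdStar1 left (walkChain opp l) z :=
    sum_mul_coB hinv left (walkChain_oneChain hinv l) z
  have h2 := sum_mul_walkChain hinv hbc l
  have h3 : ∀ (l : List H) (u : F), IsWalk opp left l u v → (l.map (bd2 opp left z)).sum =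
      (if z = v then 1 else 0) - (if z = u then 1 else 0) := by
    intro l
    induction l with
    | nil =>
      rintro u rfl
      simp
    | cons h l ih =>
      rintro u ⟨rfl, hl⟩
      rw [List.map_cons, List.sum_cons, ih _ hl]
      simp only [bd2, eq_comm (a := z)]
      ring
  rw [h3 l u hw] at h2
  simp only [mul_comm (bd2 opp left z _)] at h2
  omega

/-! ### The equivalences -/

lemma bd1_comb {U ι : Type*} [DecidableEq U] [Fintype ι] (t : H → U) (z : ι → ℤ) (g : ι → H → ℤ)
    (v : U) : bd1 t (fun h => ∑ i, z i * g i h) v = ∑ i, z i * bd1 t (g i) v := by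
  simp only [bd1, Finset.mul_sum]
  rw [Finset.sum_comm]
  refine Finset.sum_congr rfl fun h _ => ?_
  split_ifs <;> simp

lemma bd1_add {U : Type*} [DecidableEq U] (t : H → U) (f g : H → ℤ) (v : U) :
    bd1 t (fun h => f h + g h) v = bd1 t f v + bd1 t g v := by
  simp only [bd1, ← Finset.sum_add_distrib]
  refine Finset.sum_congr rfl fun h _ => ?_
  split_ifs <;> simp

lemma bd1_sub {U : Type*} [DecidableEq U] (t : H → U) (f g : H → ℤ) (v : U) :
    bd1 t (fun h => f h - g h) v = bd1 t f v - bd1 t g v := by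
  simp only [bd1, ← Finset.sum_sub_distrib]
  refine Finset.sum_congr rfl fun h _ => ?_
  split_ifs <;> simp

lemma oneCycle_comb {ι : Type*} [Fintype ι] {opp : H → H} {tgt : H → V} (z : ι → ℤ)
    {g : ι → H → ℤ} (hg : ∀ i, OneCycle opp tgt (g i)) :
    OneCycle opp tgt (fun h => ∑ i, z i * g i h) := by
  refine ⟨fun h => ?_, fun v => ?_⟩
  · rw [← Finset.sum_neg_distrib]
    exact Finset.sum_congr rfl fun i _ => by rw [(hg i).1]; ring
  · rw [bd1_comb]
    exact Finset.sum_eq_zero fun i _ => by rw [(hg i).2]; ring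

lemma sum_bd2 (opp : H → H) (left : H → F) (π : F → ℤ) (h : H) :
    ∑ u, π u * bd2 opp left u h = π (left h) - π (left (opp h)) := by
  simp [bd2, mul_sub]

/-- A circulation obeying the prescribed pairings bounds every competitor `D`. -/
lemma circ_bound {opp : H → H} (hinv : Function.Involutive opp) (hfp : ∀ h, opp h ≠ h)
    {tgt : H → V} {Y : Type*} [Fintype Y] {Ke : Y → H → ℤ} (hKe : ∀ e, OneChain opp (Ke e))
    {f c A B R : H → ℤ} (hf : OneChain opp f) (hc : IsCirc opp tgt f c) (hA : OneChain opp A)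
    (hB : OneChain opp B) (hR : IsCobound opp tgt R) (z : Y → ℤ) :
    (∑ e, z e * pairing c (Ke e)) + pairing c A - pairing c B ≤
      transplus f (fun h => (∑ e, z e * Ke e h) + A h - B h + R h) := by
  have hD : OneChain opp (fun h => (∑ e, z e * Ke e h) + A h - B h + R h) := by
    intro h
    have hR' := hR.oneChain hinv h
    simp only [hA h, hB h, hR', hKe _ h, mul_neg, Finset.sum_neg_distrib]
    ring
  have h1 := sum_mul_le_transplus hinv hc.1.1 hD ((prec_iff hc.1.1 hf).1 hc.2)
  rw [sum_mul_comb, sum_mul_cobound hinv hc.1 hR, ← two_mul_pairing hinv hfp hc.1.1 hA,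
    ← two_mul_pairing hinv hfp hc.1.1 hB] at h1
  simp only [← two_mul_pairing hinv hfp hc.1.1 (hKe _), mul_left_comm _ (2 : ℤ)] at h1
  rw [← Finset.mul_sum] at h1
  omega

theorem statement_10
    (opp : H → H) (tgt : H → V) (left : H → F)
    (hinv : Function.Involutive opp) (hfp : ∀ h, opp h ≠ h)
    (hbd2 : ∀ x : F, OneCycle opp tgt (bd2 opp left x))
    {Y : Type*} [Fintype Y] [DecidableEq Y]
    (fe Ke : Y → H → ℤ)
    (hfe : ∀ e, OneCycle opp tgt (fe e))
    (hKe : ∀ e, Cocycle opp left (Ke e))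
    (horth : ∀ e e', pairing (fe e) (Ke e') = if e = e' then 1 else 0)
    (hgen : ∀ D : H → ℤ, Cocycle opp left D →
      ∃ (z : Y → ℤ) (R : H → ℤ), IsCobound opp tgt R ∧
        ∀ h, D h = (∑ e, z e * Ke e h) + R h)
    (hconn : ∀ x y : F,
      Relation.ReflTransGen (fun a b => ∃ h, left h = a ∧ left (opp h) = b) x y)
    (S : Finset F) (hS : S.Nonempty) (x : F) (hx : x ∈ S)
    (P : F → H → ℤ) (hP : ∀ y ∈ S, IsCopath opp left x y (P y)) (hPx : P x = 0)
    (a : Y → ℤ) (a' : F → ℤ) (ha'x : a' x = 0)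
    (f : H → ℤ) (hf : OneChain opp f) :
    List.TFAE [
      (∃ c : H → ℤ, IsCirc opp tgt f c ∧ (∀ e, pairing c (Ke e) = a e) ∧
        ∀ y ∈ S, pairing c (P y) = a' y),
      (∀ y ∈ S, ∀ y' ∈ S, ∀ z : Y → ℤ,
        (∑ e, z e * a e) + a' y' - a' y ≤
          transplusB opp tgt f (fun h => (∑ e, z e * Ke e h) + P y' h - P y h)),
      (∀ y ∈ S, ∀ y' ∈ S, ∀ z : Y → ℤ, ∀ R : H → ℤ, IsCobound opp tgt R →
        (∀ h, |(∑ e, z e * Ke e h) + P y' h - P y h + R h| ≤ 1) →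
        (∑ e, z e * a e) + a' y' - a' y ≤
          transplus f (fun h => (∑ e, z e * Ke e h) + P y' h - P y h + R h))
    ] := by
  have hKc : ∀ e, OneChain opp (Ke e) := fun e => (hKe e).1
  tfae_have 1 → 2 := by
    rintro ⟨c, hc, hca, hcP⟩ y hy y' hy' z
    refine le_csInf ⟨_, fun _ => 0, ⟨fun _ => 0, by simp⟩, rfl⟩ ?_
    rintro n ⟨R, hR, rfl⟩
    have := circ_bound hinv hfp hKc hf hc (hP y' hy').1 (hP y hy).1 hR z
    simpa only [hca, hcP y hy, hcP y' hy'] using this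
  tfae_have 2 → 3 := by
    intro h2 y hy y' hy' z R hR _
    refine (h2 y hy y' hy' z).trans (csInf_le ⟨0, ?_⟩ ⟨R, hR, rfl⟩)
    rintro n ⟨R', _, rfl⟩
    exact transplus_nonneg _ _
  tfae_have 3 → 1 := by
    intro h3
    -- `c₀` has the right pairings with the `Ke e`; it is corrected by boundaries of faces.
    let c₀ : H → ℤ := fun h => ∑ e, a e * fe e h
    have hc₀ : OneCycle opp tgt c₀ := oneCycle_comb a hfe
    have hc₀K : ∀ e, ∑ h, c₀ h * Ke e h = 2 * a e := by
      intro e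
      simp only [c₀, Finset.sum_mul]
      rw [Finset.sum_comm]
      simp only [mul_assoc, ← Finset.mul_sum, ← two_mul_pairing hinv hfp (hfe _).1 (hKc e), horth]
      simp [mul_comm]
    let b : F → ℤ := fun y => a' y - pairing c₀ (P y)
    let w : H → ℤ := fun h => max (f h) 0 - c₀ h
    have key : ∀ u v, ∀ y ∈ S, ∀ y' ∈ S, ∀ l, IsWalk opp left l u v → l.Nodup →
        (∀ s : F, ((if s = v then 1 else 0) - (if s = u then 1 else 0) : ℤ) =
          (if s = y' then 1 else 0) - (if s = y then 1 else 0)) →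
        b y' - b y ≤ (l.map w).sum := by
      intro u v y hy y' hy' l hl hn huv
      have hcoc : Cocycle opp left (fun h => walkChain opp l h - (P y' h - P y h)) := by
        refine ⟨fun h => ?_, fun s => ?_⟩
        · simp only [walkChain_oneChain hinv l h, (hP y hy).1 h, (hP y' hy').1 h]
          ring
        · have e1 := bd1_sub left (walkChain opp l) (fun h => P y' h - P y h) s
          have e2 := bd1_sub left (P y') (P y) s
          have e3 := bdStar1_walkChain hinv hl s
          have e4 := (hP y hy).2 s
          have e5 := (hP y' hy').2 s
          have e6 := huv s
          unfold bdStar1 at *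
          unfold bd1 at e1 e2
          rw [e1, e2, e3, e4, e5, e6]
          ring
      obtain ⟨z, R, hR, hz⟩ := hgen _ hcoc
      have hD : walkChain opp l = fun h => (∑ e, z e * Ke e h) + P y' h - P y h + R h := by
        funext h
        have := hz h
        linarith
      have h4 := h3 y hy y' hy' z R hR (fun h => by
        have := walkChain_abs_le (opp := opp) hn h
        rwa [hD] at this)
      rw [← hD] at h4
      have h5 := h4.trans (transplus_walkChain_le opp f l)
      have h6 := sum_mul_walkChain hinv hc₀.1 l
      rw [hD, sum_mul_comb, sum_mul_cobound hinv hc₀ hR,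
        ← two_mul_pairing hinv hfp hc₀.1 (hP y hy).1,
        ← two_mul_pairing hinv hfp hc₀.1 (hP y' hy').1] at h6
      simp only [hc₀K, mul_left_comm _ (2 : ℤ)] at h6
      rw [← Finset.mul_sum] at h6
      have h7 : (l.map w).sum = (l.map fun h => max (f h) 0).sum - (l.map c₀).sum := by
        clear_value c₀
        clear * -
        induction l with
        | nil => simp
        | cons k l ih =>
          simp only [List.map_cons, List.sum_cons, ih, w]
          ring
      rw [h7]
      simp only [b]
      omega
    obtain ⟨π, hπS, hπ⟩ := exists_potential hinv hconn w S hx b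
      (fun l u hl hn => by
        have := key u u x hx x hx l hl hn (fun s => by simp)
        simpa using this)
      (fun y hy y' hy' l hl hn => key y y' y hy y' hy' l hl hn (fun s => rfl))
    let d : H → ℤ := fun h => ∑ u, π u * bd2 opp left u h
    have hd : OneCycle opp tgt d := oneCycle_comb π hbd2
    let c : H → ℤ := fun h => c₀ h + d h
    have hc : OneCycle opp tgt c := by
      refine ⟨fun h => ?_, fun v => ?_⟩
      · simp only [c, hc₀.1 h, hd.1 h]
        ring
      · rw [bd1_add, hc₀.2, hd.2]
        rfl
    have hcK : ∀ K, OneChain opp K →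
        ∑ h, c h * K h = ∑ h, c₀ h * K h + 2 * ∑ u, π u * bdStar1 left K u := by
      intro K hK
      simp only [c, d, add_mul, Finset.sum_add_distrib, Finset.sum_mul]
      rw [Finset.sum_comm, Finset.mul_sum]
      congr 1
      refine Finset.sum_congr rfl fun u _ => ?_
      have h1 : ∑ h, K h * bd2 opp left u h = 2 * bdStar1 left K u := sum_mul_coB hinv left hK u
      rw [mul_left_comm, ← h1, Finset.mul_sum]
      exact Finset.sum_congr rfl fun h _ => by ring
    refine ⟨c, ⟨hc, (prec_iff hc.1 hf).2 fun h => ?_⟩, fun e => ?_, fun y hy => ?_⟩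
    · have h1 := hπ h
      have h2 := sum_bd2 opp left π h
      simp only [w] at h1
      simp only [c, d]
      omega
    · have h1 := hcK (Ke e) (hKc e)
      rw [← two_mul_pairing hinv hfp hc.1 (hKc e), hc₀K] at h1
      simp only [(hKe e).2, mul_zero, Finset.sum_const_zero] at h1
      omega
    · have h1 := hcK (P y) (hP y hy).1
      rw [← two_mul_pairing hinv hfp hc.1 (hP y hy).1,
        ← two_mul_pairing hinv hfp hc₀.1 (hP y hy).1] at h1
      have h2 : ∑ u, π u * bdStar1 left (P y) u = π y - π x := by
        simp [(hP y hy).2, mul_sub]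
      have h4 : b x = 0 := by
        simp [b, ha'x, hPx, pairing]
      rw [h2, hπS y hy, hπS x hx, h4] at h1
      simp only [b] at h1
      omega
  tfae_finish

end Paper
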